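/- For every integer e ≥ 1 and general points: ℓ(L(6e, 6e−6, 6^{2e})) = 0 (virtual dimension −15), ℓ(L(6e+1, 6e−5, 6^{2e})) = 2 (virtual dimension −8), ℓ(L(6e+2, 6e−4, 6^{2e})) = 5 (virtual dimension −1), ℓ(L(6e+3, 6e−3, 6^{2e})) = 9 (virtual dimension 6), and ℓ(L(6e+4, 6e−2, 6^{2e})) = 14 (virtual dimension 13); in particular all five systems are special. -/

import Mathlib

open MvPolynomial

/-- The iterated partial derivative corresponding to the multi-index `ν`. -/
noncomputable def mderiv (ν : Fin 3 → ℕ) :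
    MvPolynomial (Fin 3) ℂ →ₗ[ℂ] MvPolynomial (Fin 3) ℂ :=
  ((pderiv (R := ℂ) (0 : Fin 3)).toLinearMap ^ ν 0) ∘ₗ
  ((pderiv (R := ℂ) (1 : Fin 3)).toLinearMap ^ ν 1) ∘ₗ
  ((pderiv (R := ℂ) (2 : Fin 3)).toLinearMap ^ ν 2)

/-- The linear system `L(d; m)` of homogeneous forms of degree `d` in three variables
all of whose partial derivatives of order `< m i` vanish at the point `p i`,
i.e. plane curves of degree `d` with multiplicity at least `m i` at `p i`. -/
noncomputable def linSys {k : ℕ} (p : Fin k → Fin 3 → ℂ) (d : ℕ) (m : Fin k → ℕ) :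
    Submodule ℂ (MvPolynomial (Fin 3) ℂ) :=
  (homogeneousSubmodule (Fin 3) ℂ d) ⊓
    ⨅ (i : Fin k), ⨅ (ν : Fin 3 → ℕ), ⨅ (_ : ν 0 + ν 1 + ν 2 < m i),
      LinearMap.ker ((aeval (p i)).toLinearMap ∘ₗ mderiv ν)

/-- The projective dimension `ℓ` of the linear system (`-1` means empty). -/
noncomputable def projDim {k : ℕ} (p : Fin k → Fin 3 → ℂ) (d : ℕ) (m : Fin k → ℕ) : ℤ :=
  (Module.finrank ℂ (linSys p d m) : ℤ) - 1

/-- The virtual dimension `v = d(d+3)/2 - ∑ mᵢ(mᵢ+1)/2`. -/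
def virtDim {k : ℕ} (d : ℕ) (m : Fin k → ℕ) : ℤ :=
  ((d : ℤ) * (d + 3)) / 2 - ∑ i : Fin k, ((m i : ℤ) * (m i + 1)) / 2

/-- The quasi-homogeneous multiplicity vector `(m₀, 6, …, 6)` on `n + 1` points. -/
def qh (n m0 : ℕ) : Fin (n + 1) → ℕ := fun i => if i = 0 then m0 else 6

/-- A property `Q` of configurations of `k` points of `ℙ²` (given by nonzero homogeneous
coordinate vectors) holds for points in general position: there is a nonzero polynomial
in the coordinates such that `Q` holds whenever it does not vanish. -/
def Generically (k : ℕ) (Q : (Fin k → Fin 3 → ℂ) → Prop) : Prop :=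
  ∃ P : MvPolynomial (Fin k × Fin 3) ℂ, P ≠ 0 ∧
    ∀ p : Fin k → Fin 3 → ℂ, (∀ i, p i ≠ 0) →
      eval (fun x => p x.1 x.2) P ≠ 0 → Q p

namespace MvPolynomial

variable {σ : Type*}

/-- All partial derivatives of `F` of order `< m` vanish at `p`. -/
def VanishTo (p : σ → ℂ) : ℕ → MvPolynomial σ ℂ → Prop
  | 0, _ => True
  | m + 1, F => eval p F = 0 ∧ ∀ i, VanishTo p m (pderiv i F)

namespace VanishTo

variable {p : σ → ℂ}

lemma zero (m : ℕ) : VanishTo p m (0 : MvPolynomial σ ℂ) := by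
  induction m with
  | zero => trivial
  | succ m ih => exact ⟨by simp, fun i => by simpa using ih⟩

lemma add {m : ℕ} {F G : MvPolynomial σ ℂ} (hF : VanishTo p m F) (hG : VanishTo p m G) :
    VanishTo p m (F + G) := by
  induction m generalizing F G with
  | zero => trivial
  | succ m ih =>
    exact ⟨by simp [hF.1, hG.1], fun i => by simpa using ih (hF.2 i) (hG.2 i)⟩

lemma sum {ι : Type*} {m : ℕ} {s : Finset ι} {F : ι → MvPolynomial σ ℂ}
    (hF : ∀ i ∈ s, VanishTo p m (F i)) : VanishTo p m (∑ i ∈ s, F i) :=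
  Finset.sum_induction _ (VanishTo p m) (fun _ _ => add) (zero m) hF

lemma of_le_of_mul {N m n : ℕ} {F G : MvPolynomial σ ℂ} (hN : N ≤ m + n)
    (hF : VanishTo p m F) (hG : VanishTo p n G) : VanishTo p N (F * G) := by
  induction N generalizing m n F G with
  | zero => trivial
  | succ N ih =>
    refine ⟨?_, fun i => ?_⟩
    · rw [map_mul]
      rcases m with - | m
      · rcases n with - | n
        · omega
        · simp [hG.1]
      · simp [hF.1]
    · rw [pderiv_mul]
      refine add ?_ ?_
      · rcases m with - | m
        · exact ih (m := 0) (n := n) (by omega) trivial hG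
        · exact ih (m := m) (n := n) (by omega) (hF.2 i) hG
      · rcases n with - | n
        · exact ih (m := m) (n := 0) (by omega) hF trivial
        · exact ih (m := m) (n := n) (by omega) hF (hG.2 i)

lemma mul {m n : ℕ} {F G : MvPolynomial σ ℂ} (hF : VanishTo p m F) (hG : VanishTo p n G) :
    VanishTo p (m + n) (F * G) :=
  of_le_of_mul le_rfl hF hG

lemma mul_left {m : ℕ} {F : MvPolynomial σ ℂ} (G : MvPolynomial σ ℂ) (hF : VanishTo p m F) :
    VanishTo p m (G * F) :=
  of_le_of_mul (m := 0) (by omega) trivial hF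

lemma pow {m : ℕ} {F : MvPolynomial σ ℂ} (hF : VanishTo p m F) (k : ℕ) :
    VanishTo p (k * m) (F ^ k) := by
  induction k with
  | zero => rw [zero_mul]; trivial
  | succ k ih => rw [pow_succ, Nat.succ_mul]; exact ih.mul hF

lemma prod {ι : Type*} {m : ι → ℕ} {s : Finset ι} {F : ι → MvPolynomial σ ℂ}
    (hF : ∀ i ∈ s, VanishTo p (m i) (F i)) : VanishTo p (∑ i ∈ s, m i) (∏ i ∈ s, F i) := by
  classical
  induction s using Finset.induction_on with
  | empty => trivial
  | insert i s hi ih =>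
    rw [Finset.sum_insert hi, Finset.prod_insert hi]
    exact (hF i (by simp)).mul (ih fun j hj => hF j (by simp [hj]))

lemma aeval_homogeneous {τ : Type*} [Fintype τ] {G : MvPolynomial τ ℂ} {j m : ℕ}
    (hG : G.IsHomogeneous j) {v : τ → MvPolynomial σ ℂ} (hv : ∀ k, VanishTo p m (v k)) :
    VanishTo p (j * m) (aeval v G) := by
  rw [aeval_def, eval₂_eq']
  refine sum fun d hd => mul_left _ ?_
  have hdj : ∑ k, d k = j := by
    rw [← Finsupp.degree_eq_sum]
    by_contra h
    exact (mem_support_iff.1 hd) (hG.coeff_eq_zero h)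
  rw [← hdj, Finset.sum_mul]
  exact prod fun k _ => (hv k).pow _

end VanishTo

lemma pderiv_pderiv_comm (i j : σ) (F : MvPolynomial σ ℂ) :
    pderiv i (pderiv j F) = pderiv j (pderiv i F) := by
  classical
  have h : ⁅pderiv (R := ℂ) i, pderiv (R := ℂ) j⁆ = 0 := by
    refine derivation_ext fun k => ?_
    simp [Derivation.commutator_apply, pderiv_X, Pi.single_apply, apply_ite]
  simpa [Derivation.commutator_apply, sub_eq_zero] using congrArg (fun D => D F) h

lemma derivative_aeval [Fintype σ] {B : Type*} [CommRing B] [Algebra ℂ B]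
    (v : σ → Polynomial B) (F : MvPolynomial σ ℂ) :
    Polynomial.derivative (aeval v F) =
      ∑ k, aeval v (pderiv k F) * Polynomial.derivative (v k) := by
  classical
  induction F using MvPolynomial.induction_on with
  | C c => simp [Polynomial.algebraMap_apply]
  | add F G hF hG => simp [hF, hG, add_mul, Finset.sum_add_distrib]
  | mul_X F i hF =>
    simp only [map_mul, Polynomial.derivative_mul, hF, pderiv_mul, pderiv_X, map_add, aeval_X,
      add_mul, Finset.sum_add_distrib, Finset.sum_mul]
    refine congrArg₂ (· + ·) (Finset.sum_congr rfl fun k _ => by ring) ?_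
    · rw [Finset.sum_eq_single i]
      · simp
      · intro k _ hk
        simp [Pi.single_eq_of_ne hk.symm]
      · simp

lemma IsHomogeneous.aeval_mul_left [Fintype σ] {B : Type*} [CommRing B] [Algebra ℂ B] {n : ℕ}
    {F : MvPolynomial σ ℂ} (hF : F.IsHomogeneous n) (u : B) (v : σ → B) :
    MvPolynomial.aeval (fun k => u * v k) F = u ^ n * MvPolynomial.aeval v F := by
  rw [aeval_def, aeval_def, eval₂_eq', eval₂_eq', Finset.mul_sum]
  refine Finset.sum_congr rfl fun d hd => ?_
  have hdj : ∑ k, d k = n := by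
    rw [← Finsupp.degree_eq_sum]
    by_contra h
    exact (mem_support_iff.1 hd) (hF.coeff_eq_zero h)
  simp only [mul_pow, Finset.prod_mul_distrib, Finset.prod_pow_eq_pow_sum, hdj]
  ring

lemma X_pow_dvd_aeval [Fintype σ] {B : Type*} [CommRing B] [Algebra ℂ B] {p : σ → ℂ}
    (u : B) (r : σ → B) {m n : ℕ} {F : MvPolynomial σ ℂ} (hF : F.IsHomogeneous n)
    (h : VanishTo p m F) :
    Polynomial.X ^ m ∣
      aeval (fun k => Polynomial.C (u * algebraMap ℂ B (p k)) + Polynomial.X * Polynomial.C (r k))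
        F := by
  induction m generalizing n F with
  | zero => simp
  | succ m ih =>
    set v : σ → Polynomial B := fun k =>
      Polynomial.C (u * algebraMap ℂ B (p k)) + Polynomial.X * Polynomial.C (r k)
    rw [Polynomial.X_pow_dvd_iff]
    have h0 : (aeval v F).coeff 0 = 0 := by
      rw [Polynomial.coeff_zero_eq_aeval_zero]
      have h1 : Polynomial.aeval (R := B) 0 (aeval v F) =
          aeval (fun k => u * algebraMap ℂ B (p k)) F := by
        have := congrArg (fun φ : MvPolynomial σ ℂ →ₐ[ℂ] B => φ F)
          (comp_aeval v ((Polynomial.aeval (R := B) (0 : B)).restrictScalars ℂ))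
        refine this.trans ?_
        simp [v]
      rw [h1, hF.aeval_mul_left, ← Function.comp_def (algebraMap ℂ B) p, aeval_algebraMap_apply]
      have h2 : aeval p F = 0 := h.1
      simp [h2]
    have hd : Polynomial.X ^ m ∣ Polynomial.derivative (aeval v F) := by
      rw [derivative_aeval]
      exact Finset.dvd_sum fun k _ => (ih hF.pderiv (h.2 k)).mul_right _
    rw [Polynomial.X_pow_dvd_iff] at hd
    intro k hk
    rcases k with - | k
    · exact h0
    · have h3 := hd k (by omega)
      rw [Polynomial.coeff_derivative] at h3
      have h4 : IsUnit ((k : B) + 1) := by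
        have : ((k : B) + 1) = algebraMap ℂ B ((k : ℂ) + 1) := by simp
        rw [this]
        exact (IsUnit.mk0 _ (Nat.cast_add_one_ne_zero k)).map _
      exact h4.mul_left_eq_zero.1 h3

lemma pow_dvd_aeval [Fintype σ] {B : Type*} [CommRing B] [Algebra ℂ B] {p : σ → ℂ}
    (u s : B) (v : σ → B) {m n : ℕ} {F : MvPolynomial σ ℂ} (hF : F.IsHomogeneous n)
    (h : VanishTo p m F) (hv : ∀ k, s ∣ v k - u * algebraMap ℂ B (p k)) :
    s ^ m ∣ aeval v F := by
  choose r hr using hv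
  have h1 := map_dvd ((Polynomial.aeval (R := B) s).restrictScalars ℂ)
    (X_pow_dvd_aeval u r hF h)
  have h2 := congrArg (fun φ : MvPolynomial σ ℂ →ₐ[ℂ] B => φ F)
    (comp_aeval (fun k => Polynomial.C (u * algebraMap ℂ B (p k)) +
      Polynomial.X * Polynomial.C (r k)) ((Polynomial.aeval (R := B) s).restrictScalars ℂ))
  simp only [AlgHom.comp_apply] at h2
  rw [h2] at h1
  have h3 : (fun k => ((Polynomial.aeval (R := B) s).restrictScalars ℂ)
      (Polynomial.C (u * algebraMap ℂ B (p k)) + Polynomial.X * Polynomial.C (r k))) = v := by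
    funext k
    simp only [AlgHom.restrictScalars_apply, map_add, map_mul, Polynomial.aeval_X,
      Polynomial.aeval_C, Algebra.algebraMap_self, RingHom.id_apply]
    rw [← hr k]
    ring
  rw [h3] at h1
  simpa using h1

end MvPolynomial

lemma mderiv_pderiv (i : Fin 3) (ν : Fin 3 → ℕ) (F : MvPolynomial (Fin 3) ℂ) :
    mderiv ν (pderiv i F) = mderiv (ν + Pi.single i 1) F := by
  have h01 : Commute (pderiv (R := ℂ) (0 : Fin 3)).toLinearMap
      (pderiv (R := ℂ) (1 : Fin 3)).toLinearMap :=
    LinearMap.ext fun F => pderiv_pderiv_comm _ _ F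
  have h02 : Commute (pderiv (R := ℂ) (0 : Fin 3)).toLinearMap
      (pderiv (R := ℂ) (2 : Fin 3)).toLinearMap :=
    LinearMap.ext fun F => pderiv_pderiv_comm _ _ F
  have h12 : Commute (pderiv (R := ℂ) (1 : Fin 3)).toLinearMap
      (pderiv (R := ℂ) (2 : Fin 3)).toLinearMap :=
    LinearMap.ext fun F => pderiv_pderiv_comm _ _ F
  have key : mderiv ν * (pderiv (R := ℂ) i).toLinearMap = mderiv (ν + Pi.single i 1) := by
    simp only [mderiv, ← Module.End.mul_eq_comp]
    fin_cases i
    · simp only [Fin.zero_eta, Pi.add_apply, Pi.single_eq_same, Fin.isValue, ne_eq,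
        Pi.single_eq_of_ne, one_ne_zero, not_false_eq_true, add_zero, pow_succ, mul_assoc,
        Fin.reduceEq]
      rw [← (h02.pow_right _).eq, ← mul_assoc (_ ^ ν 1), ← (h01.pow_right _).eq, mul_assoc]
    · simp only [Fin.mk_one, Pi.add_apply, Pi.single_eq_same, Fin.isValue, ne_eq,
        Pi.single_eq_of_ne, zero_ne_one, not_false_eq_true, add_zero, pow_succ, mul_assoc,
        Fin.reduceEq]
      rw [← (h12.pow_right _).eq]
    · simp only [Fin.reduceFinMk, Pi.add_apply, Pi.single_eq_same, Fin.isValue, ne_eq,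
        Pi.single_eq_of_ne, not_false_eq_true, add_zero, pow_succ, mul_assoc,
        Fin.reduceEq]
  exact congrArg (fun D : Module.End ℂ (MvPolynomial (Fin 3) ℂ) => D F) key

lemma vanishTo_iff_mderiv (p : Fin 3 → ℂ) (m : ℕ) (F : MvPolynomial (Fin 3) ℂ) :
    VanishTo p m F ↔ ∀ ν : Fin 3 → ℕ, ν 0 + ν 1 + ν 2 < m → eval p (mderiv ν F) = 0 := by
  induction m generalizing F with
  | zero => simp [VanishTo]
  | succ m ih =>
    simp only [VanishTo, ih, mderiv_pderiv]
    constructor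
    · rintro ⟨h0, h1⟩ ν hν
      by_cases hz : ∃ i, ν i ≠ 0
      · obtain ⟨i, hi⟩ := hz
        have hs : ν - Pi.single i 1 + Pi.single i 1 = ν := by
          funext k
          by_cases hk : k = i
          · subst hk
            simp only [Pi.add_apply, Pi.sub_apply, Pi.single_eq_same]
            omega
          · simp [hk]
        rw [← hs] at hν ⊢
        refine h1 i _ ?_
        have : (∑ k, (ν - Pi.single i 1 + Pi.single i 1 : Fin 3 → ℕ) k) =
            (∑ k, (ν - Pi.single i 1 : Fin 3 → ℕ) k) + 1 := by
          simp [Finset.sum_add_distrib]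
        simp only [Fin.sum_univ_three] at this
        omega
      · push Not at hz
        simpa [mderiv, hz] using h0
    · intro h
      refine ⟨by simpa [mderiv] using h 0 (by simp), fun i ν hν => h _ ?_⟩
      have : (∑ k, (ν + Pi.single i 1 : Fin 3 → ℕ) k) = (∑ k, ν k) + 1 := by
        simp [Finset.sum_add_distrib]
      simp only [Fin.sum_univ_three] at this
      omega

lemma mem_linSys {k : ℕ} {p : Fin k → Fin 3 → ℂ} {d : ℕ} {m : Fin k → ℕ}
    {F : MvPolynomial (Fin 3) ℂ} :
    F ∈ linSys p d m ↔ F.IsHomogeneous d ∧ ∀ i, VanishTo (p i) (m i) F := by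
  simp only [linSys, Submodule.mem_inf, mem_homogeneousSubmodule, Submodule.mem_iInf,
    LinearMap.mem_ker, vanishTo_iff_mderiv]
  rfl

lemma finrank_homogeneousSubmodule_fin_three (n : ℕ) :
    Module.finrank ℂ (homogeneousSubmodule (Fin 3) ℂ n) = (n + 2).choose 2 := by
  have hS : {d : Fin 3 →₀ ℕ | d.degree = n} =
      ((Finset.univ : Finset (Fin 3)).finsuppAntidiag n : Set (Fin 3 →₀ ℕ)) := by
    ext d
    simp [Finset.mem_finsuppAntidiag, Finsupp.degree_eq_sum]
  have h1 : Module.finrank ℂ (homogeneousSubmodule (Fin 3) ℂ n) =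
      Module.finrank ℂ (((Finset.univ : Finset (Fin 3)).finsuppAntidiag n) →₀ ℂ) := by
    rw [homogeneousSubmodule_eq_finsupp_supported, hS]
    exact LinearEquiv.finrank_eq
      (((AddMonoidAlgebra.coeffLinearEquiv ℂ).submoduleMap _).trans
        ((LinearEquiv.ofEq _ _ (Submodule.map_comap_eq_of_surjective
          (AddMonoidAlgebra.coeffLinearEquiv ℂ).surjective _)).trans
        (Finsupp.supportedEquivFinsupp (M := ℂ) (R := ℂ) _)))
  rw [h1, Module.finrank_finsupp_self, Fintype.card_coe,
    Finset.card_finsuppAntidiag_nat_eq_choose]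
  rw [Finset.card_univ, Fintype.card_fin, show 3 + n - 1 = n + 2 by omega]
  exact (Nat.choose_symm_add (a := n) (b := 2))

lemma virtDim_qh (n d m : ℕ) :
    virtDim d (qh n m) = ((d : ℤ) * (d + 3)) / 2 - ((m : ℤ) * (m + 1)) / 2 - 21 * n := by
  rw [virtDim, Fin.sum_univ_succ]
  simp only [qh, Fin.succ_ne_zero, if_true, if_false]
  simp
  ring

lemma MvPolynomial.IsHomogeneous.of_eq {σ R : Type*} [CommSemiring R] {F : MvPolynomial σ R}
    {m n : ℕ} (h : F.IsHomogeneous m) (hmn : m = n) : F.IsHomogeneous n :=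
  hmn ▸ h

lemma MvPolynomial.IsHomogeneous.homogeneousComponent_add_mul {σ R : Type*} [CommSemiring R]
    {Q : MvPolynomial σ R} {n : ℕ} (hQ : Q.IsHomogeneous n) (j : ℕ) (G : MvPolynomial σ R) :
    homogeneousComponent (n + j) (Q * G) = Q * homogeneousComponent j G := by
  have h (i : ℕ) : homogeneousComponent (n + j) (Q * homogeneousComponent i G) =
      if i = j then Q * homogeneousComponent i G else 0 := by
    rw [homogeneousComponent_of_mem (hQ.mul (homogeneousComponent_isHomogeneous i G))]
    simp only [Nat.add_left_cancel_iff, eq_comm]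
  conv_lhs => rw [← sum_homogeneousComponent G, Finset.mul_sum, map_sum]
  simp only [h, Finset.sum_ite_eq', Finset.mem_range, ite_eq_left_iff, not_lt]
  intro hj
  rw [homogeneousComponent_eq_zero _ _ (by omega), mul_zero]

section BinaryForm

variable {B B' : Type*} [CommRing B] [Algebra ℂ B] [CommRing B'] [Algebra ℂ B']

/-- The value of the bivariate polynomial `g` at the pair `(s, t)`. -/
noncomputable def binEval (g : MvPolynomial (Fin 2) ℂ) (s t : B) : B := aeval ![s, t] g

lemma algHom_aeval {σ : Type*} (φ : B →ₐ[ℂ] B') (v : σ → B) (F : MvPolynomial σ ℂ) :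
    φ (aeval v F) = aeval (fun k => φ (v k)) F :=
  congrArg (fun ψ : MvPolynomial σ ℂ →ₐ[ℂ] B' => ψ F) (comp_aeval v φ)

lemma map_binEval (φ : B →ₐ[ℂ] B') (g : MvPolynomial (Fin 2) ℂ) (s t : B) :
    φ (binEval g s t) = binEval g (φ s) (φ t) := by
  rw [binEval, binEval, algHom_aeval]
  congr 1
  congr 1
  funext k
  fin_cases k <;> rfl

lemma binEval_mul_left {g : MvPolynomial (Fin 2) ℂ} {n : ℕ} (hg : g.IsHomogeneous n) (u s t : B) :
    binEval g (u * s) (u * t) = u ^ n * binEval g s t := by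
  rw [binEval, binEval, ← hg.aeval_mul_left]
  congr 1
  congr 1
  funext k
  fin_cases k <;> rfl

lemma binEval_add (g h : MvPolynomial (Fin 2) ℂ) (s t : B) :
    binEval (g + h) s t = binEval g s t + binEval h s t := map_add _ _ _

lemma binEval_sub (g h : MvPolynomial (Fin 2) ℂ) (s t : B) :
    binEval (g - h) s t = binEval g s t - binEval h s t := map_sub _ _ _

lemma binEval_mul (g h : MvPolynomial (Fin 2) ℂ) (s t : B) :
    binEval (g * h) s t = binEval g s t * binEval h s t := map_mul _ _ _

lemma binEval_C (c : ℂ) (s t : B) : binEval (C c) s t = algebraMap ℂ B c := aeval_C _ _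

lemma binEval_X_one (s t : B) : binEval (X 1) s t = t := aeval_X _ _

lemma dvd_binEval {g : MvPolynomial (Fin 2) ℂ} {n : ℕ} (hg : g.IsHomogeneous n) {s₀ t₀ : ℂ}
    (ht₀ : t₀ ≠ 0) (h : binEval g s₀ t₀ = 0) (s t : B) :
    algebraMap ℂ B t₀ * s - algebraMap ℂ B s₀ * t ∣ binEval g s t := by
  have h1 : VanishTo ![s₀, t₀] 1 g := ⟨h, fun _ => trivial⟩
  have hinv : algebraMap ℂ B t₀⁻¹ * algebraMap ℂ B t₀ = 1 := by
    rw [← map_mul, inv_mul_cancel₀ ht₀, map_one]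
  have := pow_dvd_aeval (algebraMap ℂ B t₀⁻¹ * t)
    (algebraMap ℂ B t₀ * s - algebraMap ℂ B s₀ * t) ![s, t] hg h1 (fun k => by
      fin_cases k
      · exact ⟨algebraMap ℂ B t₀⁻¹, by simp; linear_combination (-s) * hinv⟩
      · exact ⟨0, by simp; linear_combination (-t) * hinv⟩)
  rwa [pow_one] at this

lemma isHomogeneous_binEval {σ : Type*} {g : MvPolynomial (Fin 2) ℂ} {n m : ℕ}
    (hg : g.IsHomogeneous n) {s t : MvPolynomial σ ℂ} (hs : s.IsHomogeneous m)
    (ht : t.IsHomogeneous m) : (binEval g s t).IsHomogeneous (m * n) :=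
  hg.aeval _ fun k => by fin_cases k <;> assumption

lemma vanishTo_binEval {σ : Type*} {p : σ → ℂ} {g : MvPolynomial (Fin 2) ℂ} {n : ℕ}
    (hg : g.IsHomogeneous n) {s t : MvPolynomial σ ℂ} (hs : VanishTo p 1 s)
    (ht : VanishTo p 1 t) : VanishTo p n (binEval g s t) := by
  rw [← mul_one n]
  exact VanishTo.aeval_homogeneous hg fun k => by fin_cases k <;> assumption

end BinaryForm

/-- Coordinates of the projection of `p` from `o`, as a pencil of lines through `o`. -/
def pencilCoord {R : Type*} [CommRing R] (o p : Fin 3 → R) : Fin 2 → R :=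
  ![o 2 * p 0 - o 0 * p 2, o 2 * p 1 - o 1 * p 2]

/-- A plane de Jonquières transformation of degree `f + 2` with centre `o` and `2 f + 2` simple
base points `q i`, written as a matrix of binary forms in the pencil of lines through `o`. -/
structure DeJonquieres (f : ℕ) (o : Fin 3 → ℂ) (q : Fin (2 * f + 2) → Fin 3 → ℂ) where
  /-- upper left entry -/
  a : MvPolynomial (Fin 2) ℂ
  /-- upper right entry -/
  b : MvPolynomial (Fin 2) ℂ
  /-- lower left entry -/
  c : MvPolynomial (Fin 2) ℂ
  /-- lower right entry -/
  d : MvPolynomial (Fin 2) ℂ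
  ha : a.IsHomogeneous f
  hb : b.IsHomogeneous (f + 1)
  hc : c.IsHomogeneous (f + 1)
  hd : d.IsHomogeneous (f + 2)
  det_ne_zero : a * d - b * c ≠ 0
  center_ne_zero : o 2 ≠ 0
  coord_ne_zero : ∀ i, pencilCoord o (q i) 1 ≠ 0
  coord_ne : ∀ i j, i ≠ j → pencilCoord o (q i) 1 * pencilCoord o (q j) 0 -
    pencilCoord o (q i) 0 * pencilCoord o (q j) 1 ≠ 0
  base_fst : ∀ i, binEval a (pencilCoord o (q i) 0) (pencilCoord o (q i) 1) * q i 2 +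
    binEval b (pencilCoord o (q i) 0) (pencilCoord o (q i) 1) = 0
  base_snd : ∀ i, binEval c (pencilCoord o (q i) 0) (pencilCoord o (q i) 1) * q i 2 +
    binEval d (pencilCoord o (q i) 0) (pencilCoord o (q i) 1) = 0

namespace DeJonquieres

variable {f : ℕ} {o : Fin 3 → ℂ} {q : Fin (2 * f + 2) → Fin 3 → ℂ} (J : DeJonquieres f o q)

/-- The determinant of the matrix of binary forms. -/
noncomputable def det : MvPolynomial (Fin 2) ℂ := J.a * J.d - J.b * J.c

lemma isHomogeneous_det : J.det.IsHomogeneous (2 * f + 2) := by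
  refine IsHomogeneous.sub ?_ ?_
  · exact IsHomogeneous.of_eq (J.ha.mul J.hd) (by ring)
  · exact IsHomogeneous.of_eq (J.hb.mul J.hc) (by ring)

lemma binEval_det {B : Type*} [CommRing B] [Algebra ℂ B] (s t : B) :
    binEval J.det s t = binEval J.a s t * binEval J.d s t - binEval J.b s t * binEval J.c s t := by
  rw [det, binEval_sub, binEval_mul, binEval_mul]

lemma X_injective : Function.Injective fun g : MvPolynomial (Fin 2) ℂ =>
    binEval g (X 0 : MvPolynomial (Fin 3) ℂ) (X 1) := by
  have h : (fun g : MvPolynomial (Fin 2) ℂ => binEval g (X 0 : MvPolynomial (Fin 3) ℂ) (X 1)) =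
      rename (R := ℂ) (Fin.castSucc : Fin 2 → Fin 3) := by
    funext g
    rw [aeval_unique (rename (R := ℂ) (Fin.castSucc : Fin 2 → Fin 3)), binEval]
    congr 2
    funext k
    fin_cases k <;> simp
  rw [h]
  exact rename_injective _ (Fin.castSucc_injective 2)

variable (q) in
/-- The linear form in the first two coordinates attached to the line joining `o` and `q i`. -/
noncomputable def lineForm (o : Fin 3 → ℂ) (i : Fin (2 * f + 2)) : MvPolynomial (Fin 3) ℂ :=
  C (pencilCoord o (q i) 1) * X 0 - C (pencilCoord o (q i) 0) * X 1

lemma isHomogeneous_lineForm (i) : (lineForm q o i).IsHomogeneous 1 :=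
  (isHomogeneous_C_mul_X _ _).sub (isHomogeneous_C_mul_X _ _)

include J in
lemma irreducible_lineForm (i) : Irreducible (lineForm q o i) := by
  have h : coeff (Finsupp.single 0 1) (lineForm q o i) = pencilCoord o (q i) 1 := by
    simp [lineForm, coeff_C_mul, coeff_X, Finsupp.single_left_inj]
  refine irreducible_of_totalDegree_eq_one
    ((isHomogeneous_lineForm i).totalDegree fun h0 => J.coord_ne_zero i ?_) fun x hx => ?_
  · rw [← h, h0, coeff_zero]
  · refine (ne_zero_of_dvd_ne_zero (J.coord_ne_zero i) ?_).isUnit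
    rw [← h]
    exact hx _

/-- Evaluating the first two variables at the coordinates of the `i`-th line. -/
noncomputable def evalLine (o : Fin 3 → ℂ) (q : Fin (2 * f + 2) → Fin 3 → ℂ)
    (i : Fin (2 * f + 2)) :
    MvPolynomial (Fin 3) ℂ →ₐ[ℂ] ℂ :=
  aeval ![pencilCoord o (q i) 0, pencilCoord o (q i) 1, 0]

lemma evalLine_lineForm (i j : Fin (2 * f + 2)) : evalLine o q i (lineForm q o j) =
    pencilCoord o (q j) 1 * pencilCoord o (q i) 0 -
      pencilCoord o (q j) 0 * pencilCoord o (q i) 1 := by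
  simp [evalLine, lineForm]

include J in
lemma isRelPrime_lineForm {i j : Fin (2 * f + 2)} (h : i ≠ j) :
    IsRelPrime (lineForm q o i) (lineForm q o j) := by
  rw [(J.irreducible_lineForm i).isRelPrime_iff_not_dvd]
  intro hd
  have := map_dvd (evalLine o q i) hd
  rw [evalLine_lineForm, evalLine_lineForm, mul_comm, sub_self, zero_dvd_iff] at this
  exact J.coord_ne j i h.symm this

lemma lineForm_dvd {g : MvPolynomial (Fin 2) ℂ} {n : ℕ} (hg : g.IsHomogeneous n) (i)
    (h0 : pencilCoord o (q i) 1 ≠ 0)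
    (h : binEval g (pencilCoord o (q i) 0) (pencilCoord o (q i) 1) = 0) :
    lineForm q o i ∣ binEval g (X 0) (X 1) :=
  dvd_binEval hg h0 h _ _

lemma binEval_det_coord (i) :
    binEval J.det (pencilCoord o (q i) 0) (pencilCoord o (q i) 1) = 0 := by
  rw [binEval_det]
  linear_combination binEval J.a (pencilCoord o (q i) 0) (pencilCoord o (q i) 1) * J.base_snd i -
    binEval J.c (pencilCoord o (q i) 0) (pencilCoord o (q i) 1) * J.base_fst i

lemma binEval_det_ne_zero : binEval J.det (X 0 : MvPolynomial (Fin 3) ℂ) (X 1) ≠ 0 := fun h =>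
  J.det_ne_zero (X_injective (h.trans (map_zero (aeval _)).symm))

lemma exists_det_eq : ∃ κ : ℂ, κ ≠ 0 ∧
    binEval J.det (X 0) (X 1) = C κ * ∏ i, lineForm q o i := by
  obtain ⟨g, hg⟩ : ∏ i, lineForm q o i ∣ binEval J.det (X 0) (X 1) :=
    Finset.prod_dvd_of_isRelPrime (fun i _ j _ hij => J.isRelPrime_lineForm hij)
      fun i _ => lineForm_dvd J.isHomogeneous_det i (J.coord_ne_zero i) (J.binEval_det_coord i)
  have h0 := J.binEval_det_ne_zero
  rw [hg] at h0
  have hP := left_ne_zero_of_mul h0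
  have hg0 := right_ne_zero_of_mul h0
  have h1 := (isHomogeneous_binEval J.isHomogeneous_det (isHomogeneous_X ℂ (0 : Fin 3))
    (isHomogeneous_X ℂ 1)).totalDegree (hg ▸ h0)
  have h2 := (IsHomogeneous.prod Finset.univ _ _
    fun i _ => isHomogeneous_lineForm (q := q) (o := o) i).totalDegree hP
  rw [hg, totalDegree_mul_of_isDomain hP hg0, h2] at h1
  have h3 : g.totalDegree = 0 := by simpa using h1
  rw [totalDegree_eq_zero_iff_eq_C] at h3
  refine ⟨coeff 0 g, fun h => hg0 (by rw [h3, h, C_0]), ?_⟩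
  rw [hg, ← h3, mul_comm]

/-- The factor by which the inverse transformation scales the pencil coordinates. -/
noncomputable def U : MvPolynomial (Fin 3) ℂ :=
  binEval J.a (X 0) (X 1) * X 2 - binEval J.c (X 0) (X 1)

/-- The component of the inverse transformation along the centre. -/
noncomputable def Z : MvPolynomial (Fin 3) ℂ :=
  binEval J.d (X 0) (X 1) - binEval J.b (X 0) (X 1) * X 2

/-- The inverse transformation. -/
noncomputable def inv : Fin 3 → MvPolynomial (Fin 3) ℂ :=
  ![C (o 0) * J.Z + J.U * X 0, C (o 1) * J.Z + J.U * X 1, C (o 2) * J.Z]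

lemma isHomogeneous_U : J.U.IsHomogeneous (f + 1) := by
  refine IsHomogeneous.sub ?_ ?_
  · exact IsHomogeneous.of_eq ((isHomogeneous_binEval J.ha (isHomogeneous_X ℂ (0 : Fin 3))
      (isHomogeneous_X ℂ 1)).mul (isHomogeneous_X ℂ 2)) (by ring)
  · exact IsHomogeneous.of_eq (isHomogeneous_binEval J.hc (isHomogeneous_X ℂ (0 : Fin 3))
      (isHomogeneous_X ℂ 1)) (by ring)

lemma isHomogeneous_Z : J.Z.IsHomogeneous (f + 2) := by
  refine IsHomogeneous.sub ?_ ?_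
  · exact IsHomogeneous.of_eq (isHomogeneous_binEval J.hd (isHomogeneous_X ℂ (0 : Fin 3))
      (isHomogeneous_X ℂ 1)) (by ring)
  · exact IsHomogeneous.of_eq ((isHomogeneous_binEval J.hb (isHomogeneous_X ℂ (0 : Fin 3))
      (isHomogeneous_X ℂ 1)).mul (isHomogeneous_X ℂ 2)) (by ring)

lemma isHomogeneous_inv (k) : (J.inv k).IsHomogeneous (f + 2) := by
  have hU (i) : (J.U * X i).IsHomogeneous (f + 2) := J.isHomogeneous_U.mul (isHomogeneous_X ℂ i)
  fin_cases k
  · exact (J.isHomogeneous_Z.C_mul _).add (hU 0)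
  · exact (J.isHomogeneous_Z.C_mul _).add (hU 1)
  · exact J.isHomogeneous_Z.C_mul _

lemma U_ne_zero : J.U ≠ 0 := by
  intro h
  have key (w : ℂ) : binEval J.a (X 0 : MvPolynomial (Fin 3) ℂ) (X 1) * C w -
      binEval J.c (X 0) (X 1) = 0 := by
    have := congrArg (aeval ![X 0, X 1, (C w : MvPolynomial (Fin 3) ℂ)]) h
    simpa [U, map_binEval] using this
  have hc : binEval J.c (X 0 : MvPolynomial (Fin 3) ℂ) (X 1) = 0 := by simpa using key 0
  have ha : binEval J.a (X 0 : MvPolynomial (Fin 3) ℂ) (X 1) = 0 := by simpa [hc] using key 1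
  exact J.binEval_det_ne_zero (by rw [binEval_det, ha, hc]; ring)

lemma not_lineForm_dvd_U (i) : ¬ lineForm q o i ∣ J.U := by
  intro h
  have key (w : ℂ) : lineForm q o i ∣ binEval J.a (X 0 : MvPolynomial (Fin 3) ℂ) (X 1) * C w -
      binEval J.c (X 0) (X 1) := by
    have := map_dvd (aeval ![X 0, X 1, (C w : MvPolynomial (Fin 3) ℂ)]) h
    simpa [U, map_binEval, lineForm] using this
  have hc : lineForm q o i ∣ binEval J.c (X 0 : MvPolynomial (Fin 3) ℂ) (X 1) := by
    simpa using key 0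
  have ha : lineForm q o i ∣ binEval J.a (X 0 : MvPolynomial (Fin 3) ℂ) (X 1) := by
    simpa using dvd_add (key 1) hc
  have h0 : evalLine o q i (lineForm q o i) = 0 := by rw [evalLine_lineForm]; ring
  have root {g : MvPolynomial (Fin 2) ℂ} (hg : lineForm q o i ∣ binEval g (X 0) (X 1)) :
      binEval g (pencilCoord o (q i) 0) (pencilCoord o (q i) 1) = 0 := by
    have := map_dvd (evalLine o q i) hg
    rw [h0, zero_dvd_iff, map_binEval] at this
    simpa [evalLine] using this
  have hb := lineForm_dvd J.hb i (J.coord_ne_zero i) (by simpa [root ha] using J.base_fst i)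
  have hd := lineForm_dvd J.hd i (J.coord_ne_zero i) (by simpa [root hc] using J.base_snd i)
  have hdet : lineForm q o i * lineForm q o i ∣ binEval J.det (X 0) (X 1) := by
    rw [binEval_det]
    exact dvd_sub (mul_dvd_mul ha hd) (mul_dvd_mul hb hc)
  obtain ⟨κ, hκ, hdet'⟩ := J.exists_det_eq
  rw [hdet', ← Finset.mul_prod_erase Finset.univ _ (Finset.mem_univ i), mul_left_comm] at hdet
  have := map_dvd (evalLine o q i)
    ((mul_dvd_mul_iff_left (J.irreducible_lineForm i).ne_zero).1 hdet)
  rw [h0, zero_dvd_iff, map_mul, map_prod] at this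
  simp only [mul_eq_zero, Finset.prod_eq_zero_iff, evalLine_lineForm] at this
  rcases this with h | ⟨j, hj, h⟩
  · exact hκ (by simpa [evalLine] using h)
  · exact J.coord_ne j i (Finset.ne_of_mem_erase hj) h

lemma U_pow_dvd {m n : ℕ} {F : MvPolynomial (Fin 3) ℂ} (hF : F.IsHomogeneous n)
    (h : VanishTo o m F) : J.U ^ m ∣ aeval J.inv F := by
  refine pow_dvd_aeval J.Z _ _ hF h fun k => ?_
  fin_cases k
  · exact ⟨X 0, by simp [inv, algebraMap_eq]; ring⟩
  · exact ⟨X 1, by simp [inv, algebraMap_eq]; ring⟩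
  · exact ⟨0, by simp [inv, algebraMap_eq]; ring⟩

lemma lineForm_pow_dvd {m n : ℕ} {F : MvPolynomial (Fin 3) ℂ} (hF : F.IsHomogeneous n) (i)
    (h : VanishTo (q i) m F) : lineForm q o i ^ m ∣ aeval J.inv F := by
  set s := pencilCoord o (q i) 0 with hs
  set t := pencilCoord o (q i) 1 with ht
  have ht0 : t ≠ 0 := J.coord_ne_zero i
  set τ : MvPolynomial (Fin 3) ℂ := C t⁻¹ * X 1 with hτ
  have hb : (C (q i 2 * t⁻¹) * X 1 * J.a + J.b).IsHomogeneous (f + 1) := by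
    refine IsHomogeneous.add ?_ J.hb
    exact IsHomogeneous.of_eq ((isHomogeneous_C_mul_X _ _).mul J.ha) (by ring)
  have hd : (C (q i 2 * t⁻¹) * X 1 * J.c + J.d).IsHomogeneous (f + 2) := by
    refine IsHomogeneous.add ?_ J.hd
    exact IsHomogeneous.of_eq ((isHomogeneous_C_mul_X _ _).mul J.hc) (by ring)
  have hb' := lineForm_dvd hb i ht0 (by
    simp only [binEval_add, binEval_mul, binEval_C, binEval_X_one, Algebra.algebraMap_self,
      RingHom.id_apply]
    rw [← J.base_fst i, ← ht]
    field_simp)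
  have hd' := lineForm_dvd hd i ht0 (by
    simp only [binEval_add, binEval_mul, binEval_C, binEval_X_one, Algebra.algebraMap_self,
      RingHom.id_apply]
    rw [← J.base_snd i, ← ht]
    field_simp)
  have hZ : lineForm q o i ∣ J.Z - τ * C (q i 2) * J.U := by
    convert dvd_sub hd' (hb'.mul_right (X 2)) using 1
    simp only [binEval_add, binEval_mul, binEval_C, binEval_X_one, Z, U, hτ, algebraMap_eq, map_mul]
    ring
  have hinv : (C t⁻¹ * C t : MvPolynomial (Fin 3) ℂ) = 1 := by
    rw [← C_mul, inv_mul_cancel₀ ht0, C_1]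
  have hC0 : (C s : MvPolynomial (Fin 3) ℂ) = C (o 2) * C (q i 0) - C (o 0) * C (q i 2) := by
    simp [hs, pencilCoord]
  have hC1 : (C t : MvPolynomial (Fin 3) ℂ) = C (o 2) * C (q i 1) - C (o 1) * C (q i 2) := by
    simp [ht, pencilCoord]
  obtain ⟨r, hr⟩ := hZ
  have hl : lineForm q o i = C t * X 0 - C s * X 1 := rfl
  refine pow_dvd_aeval (C (o 2) * τ * J.U) _ _ hF h fun k => ?_
  fin_cases k
  · refine ⟨C (o 0) * r + J.U * C t⁻¹, ?_⟩
    simp only [inv, algebraMap_eq, Fin.zero_eta, Matrix.cons_val_zero]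
    linear_combination C (o 0) * hr - J.U * C t⁻¹ * hl - J.U * X 0 * hinv +
      J.U * C t⁻¹ * X 1 * hC0
  · refine ⟨C (o 1) * r, ?_⟩
    simp only [inv, algebraMap_eq, Fin.mk_one, Matrix.cons_val_one]
    simp
    linear_combination C (o 1) * hr - J.U * X 1 * hinv + J.U * C t⁻¹ * X 1 * hC1
  · refine ⟨C (o 2) * r, ?_⟩
    simp [inv, algebraMap_eq]
    linear_combination C (o 2) * hr

lemma dvd_aeval_inv {m m' n : ℕ} {F : MvPolynomial (Fin 3) ℂ} (hF : F.IsHomogeneous n)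
    (h : VanishTo o m F) (h' : ∀ i, VanishTo (q i) m' F) :
    J.U ^ m * binEval J.det (X 0) (X 1) ^ m' ∣ aeval J.inv F := by
  obtain ⟨κ, hκ, hdet⟩ := J.exists_det_eq
  have hu : IsUnit (C κ ^ m' : MvPolynomial (Fin 3) ℂ) := ((IsUnit.mk0 κ hκ).map C).pow _
  rw [hdet, mul_pow, mul_left_comm, hu.mul_left_dvd, ← Finset.prod_pow]
  refine IsRelPrime.mul_dvd ?_ (J.U_pow_dvd hF h) ?_
  · exact IsRelPrime.prod_right fun i _ => IsRelPrime.pow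
      ((J.irreducible_lineForm i).isRelPrime_iff_not_dvd.2 (J.not_lineForm_dvd_U i)).symm
  · exact Finset.prod_dvd_of_isRelPrime (fun i _ j _ hij => (J.isRelPrime_lineForm hij).pow)
      fun i _ => J.lineForm_pow_dvd hF i (h' i)

/-- The pencil coordinates as linear forms. -/
noncomputable def pencilForm (o : Fin 3 → ℂ) : Fin 2 → MvPolynomial (Fin 3) ℂ :=
  ![C (o 2) * X 0 - C (o 0) * X 2, C (o 2) * X 1 - C (o 1) * X 2]

lemma isHomogeneous_pencilForm (k) : (pencilForm o k).IsHomogeneous 1 := by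
  fin_cases k
  · exact (isHomogeneous_C_mul_X _ _).sub (isHomogeneous_C_mul_X _ _)
  · exact (isHomogeneous_C_mul_X _ _).sub (isHomogeneous_C_mul_X _ _)

lemma eval_pencilForm (p : Fin 3 → ℂ) (k) : eval p (pencilForm o k) = pencilCoord o p k := by
  fin_cases k <;> simp [pencilForm, pencilCoord]

lemma vanishTo_pencilForm (k) : VanishTo o 1 (pencilForm o k) := by
  refine ⟨?_, fun _ => trivial⟩
  fin_cases k
  · simp [pencilForm, mul_comm]
  · simp [pencilForm, mul_comm]

/-- The equation `g z + h`, for binary forms `g`, `h` in the pencil coordinates. -/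
noncomputable def monoidForm (o : Fin 3 → ℂ) (g h : MvPolynomial (Fin 2) ℂ) :
    MvPolynomial (Fin 3) ℂ :=
  binEval g (pencilForm o 0) (pencilForm o 1) * X 2 + binEval h (pencilForm o 0) (pencilForm o 1)

lemma isHomogeneous_monoidForm {g h : MvPolynomial (Fin 2) ℂ} {n : ℕ} (hg : g.IsHomogeneous n)
    (hh : h.IsHomogeneous (n + 1)) : (monoidForm o g h).IsHomogeneous (n + 1) := by
  refine IsHomogeneous.add ?_ ?_
  · exact ((isHomogeneous_binEval hg (isHomogeneous_pencilForm 0)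
      (isHomogeneous_pencilForm 1)).mul (isHomogeneous_X ℂ 2)).of_eq (by ring)
  · exact (isHomogeneous_binEval hh (isHomogeneous_pencilForm 0)
      (isHomogeneous_pencilForm 1)).of_eq (by ring)

lemma vanishTo_monoidForm {g h : MvPolynomial (Fin 2) ℂ} {n : ℕ} (hg : g.IsHomogeneous n)
    (hh : h.IsHomogeneous (n + 1)) : VanishTo o n (monoidForm o g h) := by
  refine VanishTo.add ?_ ?_
  · rw [mul_comm]
    exact (vanishTo_binEval hg (vanishTo_pencilForm 0) (vanishTo_pencilForm 1)).mul_left _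
  · have := vanishTo_binEval hh (vanishTo_pencilForm (o := o) 0) (vanishTo_pencilForm 1)
    simpa using VanishTo.of_le_of_mul (N := n) (m := n + 1) (n := 0) (by omega) this
      (G := 1) trivial

lemma eval_monoidForm (p : Fin 3 → ℂ) (g h : MvPolynomial (Fin 2) ℂ) :
    eval p (monoidForm o g h) = binEval g (pencilCoord o p 0) (pencilCoord o p 1) * p 2 +
      binEval h (pencilCoord o p 0) (pencilCoord o p 1) := by
  have key (g : MvPolynomial (Fin 2) ℂ) : eval p (binEval g (pencilForm o 0) (pencilForm o 1)) =
      binEval g (pencilCoord o p 0) (pencilCoord o p 1) := by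
    rw [← eval_pencilForm, ← eval_pencilForm]
    exact map_binEval (aeval p) g _ _
  rw [monoidForm, map_add, map_mul, key, key, eval_X]

/-- The equation of the contracted curve through the centre and all base points. -/
noncomputable def curve : MvPolynomial (Fin 3) ℂ := monoidForm o J.a J.b

/-- The component of the transformation outside the pencil. -/
noncomputable def tail : MvPolynomial (Fin 3) ℂ := monoidForm o J.c J.d

/-- The de Jonquières transformation itself. -/
noncomputable def hom : Fin 3 → MvPolynomial (Fin 3) ℂ :=
  ![pencilForm o 0 * J.curve, pencilForm o 1 * J.curve, J.tail]

lemma isHomogeneous_curve : J.curve.IsHomogeneous (f + 1) :=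
  isHomogeneous_monoidForm J.ha J.hb

lemma isHomogeneous_hom (k) : (J.hom k).IsHomogeneous (f + 2) := by
  have h (i) : (pencilForm o i * J.curve).IsHomogeneous (f + 2) :=
    ((isHomogeneous_pencilForm i).mul J.isHomogeneous_curve).of_eq (by ring)
  fin_cases k
  · exact h 0
  · exact h 1
  · exact isHomogeneous_monoidForm J.hc J.hd

lemma vanishTo_curve : VanishTo o f J.curve := vanishTo_monoidForm J.ha J.hb

lemma vanishTo_hom (k) : VanishTo o (f + 1) (J.hom k) := by
  have h (i) : VanishTo o (f + 1) (pencilForm o i * J.curve) := by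
    rw [mul_comm]
    exact J.vanishTo_curve.mul (vanishTo_pencilForm i)
  fin_cases k
  · exact h 0
  · exact h 1
  · exact vanishTo_monoidForm J.hc J.hd

lemma vanishTo_curve_base (i) : VanishTo (q i) 1 J.curve :=
  ⟨by rw [curve, eval_monoidForm, J.base_fst i], fun _ => trivial⟩

lemma vanishTo_hom_base (i k) : VanishTo (q i) 1 (J.hom k) := by
  fin_cases k
  · exact (J.vanishTo_curve_base i).mul_left _
  · exact (J.vanishTo_curve_base i).mul_left _
  · exact ⟨(eval_monoidForm _ _ _).trans (J.base_snd i), fun _ => trivial⟩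

lemma aeval_hom_U : aeval J.hom J.U =
    J.curve ^ f * binEval J.det (pencilForm o 0) (pencilForm o 1) := by
  have h2 := binEval_mul_left J.ha J.curve (pencilForm o 0) (pencilForm o 1)
  have h3 := binEval_mul_left J.hc J.curve (pencilForm o 0) (pencilForm o 1)
  simp only [U, map_sub, map_mul, map_binEval, aeval_X]
  simp only [hom, Matrix.cons_val_zero, Matrix.cons_val_one, Matrix.cons_val]
  rw [mul_comm (pencilForm o 0), mul_comm (pencilForm o 1), h2, h3, binEval_det]
  simp only [curve, tail, monoidForm]
  ring

lemma aeval_hom_Z : aeval J.hom J.Z =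
    J.curve ^ (f + 1) * binEval J.det (pencilForm o 0) (pencilForm o 1) * X 2 := by
  have h2 := binEval_mul_left J.hb J.curve (pencilForm o 0) (pencilForm o 1)
  have h3 := binEval_mul_left J.hd J.curve (pencilForm o 0) (pencilForm o 1)
  simp only [Z, map_sub, map_mul, map_binEval, aeval_X]
  simp only [hom, Matrix.cons_val_zero, Matrix.cons_val_one, Matrix.cons_val]
  rw [mul_comm (pencilForm o 0), mul_comm (pencilForm o 1), h2, h3, binEval_det]
  simp only [curve, tail, monoidForm]
  ring

lemma aeval_hom_inv (k) : aeval J.hom (J.inv k) =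
    (C (o 2) * J.curve ^ (f + 1) * binEval J.det (pencilForm o 0) (pencilForm o 1)) * X k := by
  have h0 : J.hom 0 = (C (o 2) * X 0 - C (o 0) * X 2) * J.curve := rfl
  have h1 : J.hom 1 = (C (o 2) * X 1 - C (o 1) * X 2) * J.curve := rfl
  fin_cases k
  · simp only [inv, Fin.zero_eta, Matrix.cons_val_zero, map_add, map_mul, aeval_hom_U, aeval_hom_Z,
      aeval_X, aeval_C, algebraMap_eq, h0]
    ring
  · simp only [inv, Fin.mk_one, Matrix.cons_val_one, Matrix.cons_val_zero, map_add, map_mul,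
      aeval_hom_U, aeval_hom_Z, aeval_X, aeval_C, algebraMap_eq, h1]
    ring
  · simp only [inv, Fin.reduceFinMk, Matrix.cons_val, map_mul, aeval_hom_Z, aeval_C, algebraMap_eq]
    ring

lemma aeval_inv_pencilForm (k : Fin 2) :
    aeval J.inv (pencilForm o k) = C (o 2) * J.U * X k.castSucc := by
  fin_cases k
  · simp [inv, pencilForm, algebraMap_eq]
    ring
  · simp [inv, pencilForm, algebraMap_eq]
    ring

lemma aeval_inv_binEval {g : MvPolynomial (Fin 2) ℂ} {n : ℕ} (hg : g.IsHomogeneous n) :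
    aeval J.inv (binEval g (pencilForm o 0) (pencilForm o 1)) =
      (C (o 2) * J.U) ^ n * binEval g (X 0) (X 1) := by
  rw [map_binEval, aeval_inv_pencilForm, aeval_inv_pencilForm, binEval_mul_left hg]
  rfl

lemma aeval_inv_curve : aeval J.inv J.curve =
    C (o 2) ^ (f + 1) * J.U ^ f * binEval J.det (X 0) (X 1) := by
  rw [curve, monoidForm, map_add, map_mul, J.aeval_inv_binEval J.ha, J.aeval_inv_binEval J.hb,
    aeval_X, binEval_det]
  have hU : J.U = binEval J.a (X 0) (X 1) * X 2 - binEval J.c (X 0) (X 1) := rfl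
  have hZ : J.Z = binEval J.d (X 0) (X 1) - binEval J.b (X 0) (X 1) * X 2 := rfl
  simp only [inv, Matrix.cons_val]
  linear_combination C (o 2) ^ (f + 1) * J.U ^ f *
    (binEval J.a (X 0) (X 1) * hZ + binEval J.b (X 0) (X 1) * hU)

lemma aeval_inv_tail : aeval J.inv J.tail =
    C (o 2) ^ (f + 2) * J.U ^ (f + 1) * binEval J.det (X 0) (X 1) * X 2 := by
  rw [tail, monoidForm, map_add, map_mul, J.aeval_inv_binEval J.hc, J.aeval_inv_binEval J.hd,
    aeval_X, binEval_det]
  have hU : J.U = binEval J.a (X 0) (X 1) * X 2 - binEval J.c (X 0) (X 1) := rfl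
  have hZ : J.Z = binEval J.d (X 0) (X 1) - binEval J.b (X 0) (X 1) * X 2 := rfl
  simp only [inv, Matrix.cons_val]
  linear_combination C (o 2) ^ (f + 2) * J.U ^ (f + 1) *
    (binEval J.c (X 0) (X 1) * hZ + binEval J.d (X 0) (X 1) * hU)

lemma aeval_inv_hom (k) : aeval J.inv (J.hom k) =
    (C (o 2) ^ (f + 2) * J.U ^ (f + 1) * binEval J.det (X 0) (X 1)) * X k := by
  fin_cases k
  · simp only [hom, Fin.zero_eta, Matrix.cons_val_zero, map_mul, aeval_inv_curve,
      aeval_inv_pencilForm, Fin.castSucc_zero]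
    ring
  · simp only [hom, Fin.mk_one, Matrix.cons_val_one, Matrix.cons_val_zero, map_mul,
      aeval_inv_curve, aeval_inv_pencilForm, Fin.castSucc_one]
    ring
  · simp only [hom, Fin.reduceFinMk, Matrix.cons_val, aeval_inv_tail]

include J in
lemma C_center_ne_zero : (C (o 2) : MvPolynomial (Fin 3) ℂ) ≠ 0 := by
  simpa using J.center_ne_zero

lemma curve_ne_zero : J.curve ≠ 0 := by
  intro h
  have := J.aeval_inv_curve
  rw [h, map_zero] at this
  exact mul_ne_zero (mul_ne_zero (pow_ne_zero _ J.C_center_ne_zero)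
    (pow_ne_zero _ J.U_ne_zero)) J.binEval_det_ne_zero this.symm

lemma binEval_det_pencilForm_ne_zero :
    binEval J.det (pencilForm o 0) (pencilForm o 1) ≠ 0 := by
  intro h
  have := J.aeval_inv_binEval J.isHomogeneous_det
  rw [h, map_zero] at this
  exact mul_ne_zero (pow_ne_zero _ (mul_ne_zero J.C_center_ne_zero J.U_ne_zero))
    J.binEval_det_ne_zero this.symm

lemma eq_zero_of_aeval_hom {G : MvPolynomial (Fin 3) ℂ} {j : ℕ} (hG : G.IsHomogeneous j)
    (h : aeval J.hom G = 0) : G = 0 := by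
  have h1 : aeval J.inv (aeval J.hom G) =
      (C (o 2) ^ (f + 2) * J.U ^ (f + 1) * binEval J.det (X 0) (X 1)) ^ j * G := by
    rw [algHom_aeval]
    simp only [aeval_inv_hom]
    rw [hG.aeval_mul_left, aeval_X_left_apply]
  rw [h, map_zero] at h1
  refine (mul_eq_zero.1 h1.symm).resolve_left (pow_ne_zero _ ?_)
  exact mul_ne_zero (mul_ne_zero (pow_ne_zero _ J.C_center_ne_zero)
    (pow_ne_zero _ J.U_ne_zero)) J.binEval_det_ne_zero

lemma pow_exponent_eq {R : Type*} [CommRing R] (c Δ : R) (f : ℕ) {j : ℕ} (hj : j ≤ 6) :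
    (c ^ f * Δ) ^ (6 * f + j) * (c ^ (2 * f + 2) * Δ) ^ 6 =
      c ^ ((f + 1) * (6 * f + 6 + j)) * Δ ^ (6 * f + 6 + j) * c ^ (6 - j) := by
  interval_cases j <;> ring

lemma exists_isHomogeneous_aeval_inv_eq {m m' j : ℕ} {F : MvPolynomial (Fin 3) ℂ}
    {n : ℕ} (hF : F.IsHomogeneous n)
    (hn : (f + 2) * n = (f + 1) * m + (2 * f + 2) * m' + j)
    (h : VanishTo o m F) (h' : ∀ i, VanishTo (q i) m' F) :
    ∃ G : MvPolynomial (Fin 3) ℂ, G.IsHomogeneous j ∧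
      aeval J.inv F = J.U ^ m * binEval J.det (X 0) (X 1) ^ m' * G := by
  obtain ⟨G, hG⟩ := J.dvd_aeval_inv hF h h'
  have hQ : (J.U ^ m * binEval J.det (X 0) (X 1) ^ m').IsHomogeneous
      ((f + 1) * m + (2 * f + 2) * m') :=
    (J.isHomogeneous_U.pow _).mul (((isHomogeneous_binEval J.isHomogeneous_det
      (isHomogeneous_X ℂ 0) (isHomogeneous_X ℂ 1)).of_eq (by ring)).pow _)
  refine ⟨homogeneousComponent j G, homogeneousComponent_isHomogeneous _ _, ?_⟩
  rw [← hQ.homogeneousComponent_add_mul, ← hG,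
    homogeneousComponent_eq_self ((hF.aeval _ J.isHomogeneous_inv).of_eq hn)]

lemma exists_eq_curve_pow_mul {j : ℕ} (hj : j ≤ 6) {F : MvPolynomial (Fin 3) ℂ}
    (hF : F.IsHomogeneous (6 * f + 6 + j)) (h : VanishTo o (6 * f + j) F)
    (h' : ∀ i, VanishTo (q i) 6 F) :
    ∃ G : MvPolynomial (Fin 3) ℂ, G.IsHomogeneous j ∧ J.curve ^ (6 - j) * aeval J.hom G = F := by
  obtain ⟨G, hG, hGF⟩ := J.exists_isHomogeneous_aeval_inv_eq (j := j) hF (by ring) h h'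
  have h2 := congrArg (aeval J.hom) hGF
  rw [algHom_aeval] at h2
  simp only [aeval_hom_inv] at h2
  have h3 := binEval_mul_left J.isHomogeneous_det J.curve (pencilForm o 0) (pencilForm o 1)
  rw [hF.aeval_mul_left, aeval_X_left_apply, map_mul, map_mul, map_pow, map_pow, aeval_hom_U,
    map_binEval, aeval_X, aeval_X] at h2
  have h4 : J.hom 0 = J.curve * pencilForm o 0 := mul_comm _ _
  have h5 : J.hom 1 = J.curve * pencilForm o 1 := mul_comm _ _
  rw [h4, h5, h3, pow_exponent_eq _ _ _ hj] at h2
  refine ⟨C ((o 2) ^ (6 * f + 6 + j))⁻¹ * G, hG.C_mul _, ?_⟩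
  have h6 : (C ((o 2) ^ (6 * f + 6 + j))⁻¹ * C (o 2) ^ (6 * f + 6 + j) :
      MvPolynomial (Fin 3) ℂ) = 1 := by
    rw [← C_pow, ← C_mul, inv_mul_cancel₀ (pow_ne_zero _ J.center_ne_zero), C_1]
  have hne : (J.curve ^ ((f + 1) * (6 * f + 6 + j)) *
      binEval J.det (pencilForm o 0) (pencilForm o 1) ^ (6 * f + 6 + j)) ≠ 0 :=
    mul_ne_zero (pow_ne_zero _ J.curve_ne_zero) (pow_ne_zero _ J.binEval_det_pencilForm_ne_zero)
  refine mul_left_cancel₀ hne ?_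
  rw [map_mul, aeval_C, algebraMap_eq]
  rw [mul_pow, mul_pow, ← pow_mul] at h2
  generalize aeval J.hom G = Y at *
  linear_combination -C ((o 2) ^ (6 * f + 6 + j))⁻¹ * h2 +
    J.curve ^ ((f + 1) * (6 * f + 6 + j)) *
      binEval J.det (pencilForm o 0) (pencilForm o 1) ^ (6 * f + 6 + j) * F * h6

lemma mem_linSys_iff {j : ℕ} (hj : j ≤ 6) (F : MvPolynomial (Fin 3) ℂ) :
    F ∈ linSys (Fin.cons o q : Fin (2 * f + 2 + 1) → Fin 3 → ℂ) (6 * f + 6 + j)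
        (qh (2 * f + 2) (6 * f + j)) ↔
      ∃ G : MvPolynomial (Fin 3) ℂ, G.IsHomogeneous j ∧
        J.curve ^ (6 - j) * aeval J.hom G = F := by
  rw [mem_linSys, Fin.forall_fin_succ]
  simp only [Fin.cons_zero, Fin.cons_succ, qh, Fin.succ_ne_zero, if_true, if_false]
  constructor
  · rintro ⟨hF, h, h'⟩
    exact J.exists_eq_curve_pow_mul hj hF h h'
  · rintro ⟨G, hG, rfl⟩
    refine ⟨((J.isHomogeneous_curve.pow _).mul (hG.aeval _ J.isHomogeneous_hom)).of_eq ?_, ?_,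
      fun i => ?_⟩
    · interval_cases j <;> ring
    · have := (J.vanishTo_curve.pow (6 - j)).mul (VanishTo.aeval_homogeneous hG J.vanishTo_hom)
      convert this using 1
      interval_cases j <;> omega
    · have := ((J.vanishTo_curve_base i).pow (6 - j)).mul
        (VanishTo.aeval_homogeneous hG (J.vanishTo_hom_base i))
      convert this using 1
      omega

include J in
lemma finrank_linSys {j : ℕ} (hj : j ≤ 6) :
    Module.finrank ℂ (linSys (Fin.cons o q : Fin (2 * f + 2 + 1) → Fin 3 → ℂ) (6 * f + 6 + j)
      (qh (2 * f + 2) (6 * f + j))) = (j + 2).choose 2 := by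
  let T : homogeneousSubmodule (Fin 3) ℂ j →ₗ[ℂ] MvPolynomial (Fin 3) ℂ :=
    (LinearMap.mulLeft ℂ (J.curve ^ (6 - j)) ∘ₗ (aeval J.hom).toLinearMap) ∘ₗ
      Submodule.subtype _
  have hT : Function.Injective T := by
    rw [← LinearMap.ker_eq_bot, LinearMap.ker_eq_bot']
    intro G hG
    refine Subtype.ext (J.eq_zero_of_aeval_hom G.2 ?_)
    exact (mul_eq_zero.1 hG).resolve_left (pow_ne_zero _ J.curve_ne_zero)
  have hR : linSys (Fin.cons o q : Fin (2 * f + 2 + 1) → Fin 3 → ℂ) (6 * f + 6 + j)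
      (qh (2 * f + 2) (6 * f + j)) = LinearMap.range T := by
    ext F
    rw [J.mem_linSys_iff hj, LinearMap.mem_range]
    exact ⟨fun ⟨G, hG, h⟩ => ⟨⟨G, hG⟩, h⟩, fun ⟨G, h⟩ => ⟨G, G.2, h⟩⟩
  rw [hR, LinearMap.finrank_range_of_inj hT, finrank_homogeneousSubmodule_fin_three]

end DeJonquieres

section Interpolation

variable {f : ℕ} {R : Type*} [CommRing R]

/-- The collocation matrix of the monomials of degree `f + 1` in `ξ`, `η` and the monomials of
degree `f` divisible by `η`, the latter multiplied by `z`. -/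
def collocation (ξ η z : Fin (2 * f + 2) → R) : Matrix (Fin (2 * f + 2)) (Fin (2 * f + 2)) R :=
  .of fun i k => if (k : ℕ) ≤ f + 1 then ξ i ^ (k : ℕ) * η i ^ (f + 1 - k)
    else ξ i ^ (k - (f + 2) : ℕ) * η i ^ (2 * f + 2 - k) * z i

/-- The part of degree `f + 1` of a linear combination of the collocation monomials. -/
noncomputable def lowForm (u : Fin (2 * f + 2) → ℂ) : MvPolynomial (Fin 2) ℂ :=
  ∑ k : Fin (2 * f + 2), if (k : ℕ) ≤ f + 1 then C (u k) * (X 0 ^ (k : ℕ) * X 1 ^ (f + 1 - k))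
    else 0

/-- The part of degree `f` of a linear combination of the collocation monomials. -/
noncomputable def highForm (u : Fin (2 * f + 2) → ℂ) : MvPolynomial (Fin 2) ℂ :=
  ∑ k : Fin (2 * f + 2), if (k : ℕ) ≤ f + 1 then 0
    else C (u k) * (X 0 ^ (k - (f + 2) : ℕ) * X 1 ^ (2 * f + 2 - k))

lemma isHomogeneous_C_mul_pow_mul_pow (c : ℂ) {m n l : ℕ} (h : m + n = l) :
    (C c * (X 0 ^ m * X 1 ^ n) : MvPolynomial (Fin 2) ℂ).IsHomogeneous l :=
  h ▸ ((isHomogeneous_X_pow _ m).mul (isHomogeneous_X_pow _ n)).C_mul c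

lemma isHomogeneous_lowForm (u : Fin (2 * f + 2) → ℂ) : (lowForm u).IsHomogeneous (f + 1) := by
  refine IsHomogeneous.sum _ _ _ fun k _ => ?_
  split_ifs with h
  · exact isHomogeneous_C_mul_pow_mul_pow _ (by omega)
  · exact isHomogeneous_zero _ _ _

lemma isHomogeneous_highForm (u : Fin (2 * f + 2) → ℂ) : (highForm u).IsHomogeneous f := by
  refine IsHomogeneous.sum _ _ _ fun k _ => ?_
  split_ifs with h
  · exact isHomogeneous_zero _ _ _
  · exact isHomogeneous_C_mul_pow_mul_pow _ (by omega)

lemma binEval_highForm_one_zero (u : Fin (2 * f + 2) → ℂ) : binEval (highForm u) (1 : ℂ) 0 = 0 := by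
  rw [highForm, binEval, map_sum]
  refine Finset.sum_eq_zero fun k _ => ?_
  split_ifs with h
  · exact map_zero _
  · have : 2 * f + 2 - (k : ℕ) ≠ 0 := by omega
    simp [this]

lemma collocation_mulVec (ξ η z u : Fin (2 * f + 2) → ℂ) (i) :
    (collocation ξ η z).mulVec u i =
      binEval (highForm u) (ξ i) (η i) * z i + binEval (lowForm u) (ξ i) (η i) := by
  rw [Matrix.mulVec, dotProduct, highForm, lowForm, binEval, binEval, map_sum, map_sum,
    Finset.sum_mul, ← Finset.sum_add_distrib]
  refine Finset.sum_congr rfl fun k _ => ?_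
  by_cases h : (k : ℕ) ≤ f + 1
  · simp [collocation, h]
    ring
  · simp [collocation, h]
    ring

lemma exists_mulVec_eq {n : ℕ} {A : Matrix (Fin n) (Fin n) ℂ} (hA : A.det ≠ 0) (w : Fin n → ℂ) :
    ∃ u, A.mulVec u = w :=
  ⟨A⁻¹.mulVec w, by rw [Matrix.mulVec_mulVec, Matrix.mul_nonsing_inv _ (Ne.isUnit hA),
    Matrix.one_mulVec]⟩

lemma DeJonquieres.nonempty {o : Fin 3 → ℂ} {q : Fin (2 * f + 2) → Fin 3 → ℂ} (ho : o 2 ≠ 0)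
    (h0 : ∀ i, pencilCoord o (q i) 1 ≠ 0)
    (hne : ∀ i j, i ≠ j → pencilCoord o (q i) 1 * pencilCoord o (q j) 0 -
      pencilCoord o (q i) 0 * pencilCoord o (q j) 1 ≠ 0)
    (hdet : (collocation (fun i => pencilCoord o (q i) 0) (fun i => pencilCoord o (q i) 1)
      fun i => q i 2).det ≠ 0) : Nonempty (DeJonquieres f o q) := by
  obtain ⟨u, hu⟩ := exists_mulVec_eq hdet fun i => -(pencilCoord o (q i) 0 ^ f * q i 2)
  obtain ⟨v, hv⟩ := exists_mulVec_eq hdet fun i =>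
    -(pencilCoord o (q i) 0 ^ (f + 2) / pencilCoord o (q i) 1)
  refine ⟨{ a := X 0 ^ f + highForm u
            b := lowForm u
            c := X 1 * highForm v
            d := X 0 ^ (f + 2) + X 1 * lowForm v
            ha := (isHomogeneous_X_pow _ _).add (isHomogeneous_highForm u)
            hb := isHomogeneous_lowForm u
            hc := ((isHomogeneous_X _ _).mul (isHomogeneous_highForm v)).of_eq (by ring)
            hd := (isHomogeneous_X_pow _ _).add
              (((isHomogeneous_X _ _).mul (isHomogeneous_lowForm v)).of_eq (by ring))
            det_ne_zero := fun h => ?_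
            center_ne_zero := ho
            coord_ne_zero := h0
            coord_ne := hne
            base_fst := fun i => ?_
            base_snd := fun i => ?_ }⟩
  · have hpow (n : ℕ) : binEval (X 0 ^ n) (1 : ℂ) 0 = 1 := by simp [binEval]
    have := congrArg (fun g => binEval g (1 : ℂ) 0) h
    simp only [binEval_sub, binEval_mul, binEval_add, hpow, binEval_highForm_one_zero,
      binEval_X_one] at this
    simp [binEval] at this
  · have := congrFun hu i
    rw [collocation_mulVec] at this
    have hpow : binEval (X 0 ^ f) (pencilCoord o (q i) 0) (pencilCoord o (q i) 1) =
      pencilCoord o (q i) 0 ^ f := by simp [binEval]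
    rw [binEval_add, hpow]
    linear_combination this
  · have := congrFun hv i
    rw [collocation_mulVec] at this
    have hpow : binEval (X 0 ^ (f + 2)) (pencilCoord o (q i) 0) (pencilCoord o (q i) 1) =
      pencilCoord o (q i) 0 ^ (f + 2) := by simp [binEval]
    have hdiv := mul_div_cancel₀ (pencilCoord o (q i) 0 ^ (f + 2)) (h0 i)
    rw [binEval_add, binEval_mul, binEval_mul, binEval_X_one, hpow]
    linear_combination pencilCoord o (q i) 1 * this - hdiv

/-- The polynomial function of the points whose non-vanishing guarantees the existence of a
de Jonquières transformation with centre `p 0` and base points the other `p i`. -/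
def discriminant (p : Fin (2 * f + 2 + 1) → Fin 3 → R) : R :=
  p 0 2 * (∏ i : Fin (2 * f + 2), pencilCoord (p 0) (p i.succ) 1) *
    (∏ i : Fin (2 * f + 2), ∏ j : Fin (2 * f + 2), if i = j then 1 else
      pencilCoord (p 0) (p i.succ) 1 * pencilCoord (p 0) (p j.succ) 0 -
        pencilCoord (p 0) (p i.succ) 0 * pencilCoord (p 0) (p j.succ) 1) *
    (collocation (fun i => pencilCoord (p 0) (p i.succ) 0)
      (fun i => pencilCoord (p 0) (p i.succ) 1) fun i => p i.succ 2).det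

lemma map_pencilCoord {S : Type*} [CommRing S] (φ : R →+* S) (o p : Fin 3 → R) (k : Fin 2) :
    φ (pencilCoord o p k) = pencilCoord (fun k => φ (o k)) (fun k => φ (p k)) k := by
  fin_cases k <;> simp [pencilCoord]

lemma map_discriminant {S : Type*} [CommRing S] (φ : R →+* S)
    (p : Fin (2 * f + 2 + 1) → Fin 3 → R) :
    φ (discriminant p) = discriminant fun i k => φ (p i k) := by
  have h (ξ η z : Fin (2 * f + 2) → R) : φ.mapMatrix (collocation ξ η z) =
      collocation (fun i => φ (ξ i)) (fun i => φ (η i)) fun i => φ (z i) := by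
    ext i k
    by_cases hk : (k : ℕ) ≤ f + 1 <;> simp [collocation, hk]
  simp only [discriminant, map_mul, map_prod, apply_ite φ, map_one, map_sub, map_pencilCoord,
    RingHom.map_det, h]

lemma discriminant_monomial_curve_ne_zero :
    discriminant (Fin.cons ![0, 0, 1] fun i : Fin (2 * f + 2) => ![(i : ℂ), 1, (i : ℂ) ^ (f + 2)])
      ≠ 0 := by
  have hinj : Function.Injective fun i : Fin (2 * f + 2) => ((i : ℕ) : ℂ) :=
    fun i j h => Fin.ext (Nat.cast_injective h)
  have hV : (collocation (fun i : Fin (2 * f + 2) => ((i : ℕ) : ℂ)) (fun _ => 1)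
      fun i => ((i : ℕ) : ℂ) ^ (f + 2)) = Matrix.vandermonde fun i => ((i : ℕ) : ℂ) := by
    ext i k
    by_cases hk : (k : ℕ) ≤ f + 1
    · simp [collocation, hk]
    · have : (k : ℕ) - (f + 2) + (f + 2) = k := by omega
      simp [collocation, hk, ← pow_add, this]
  simp only [discriminant, Fin.cons_zero, Fin.cons_succ, pencilCoord, Matrix.cons_val,
    Matrix.cons_val_zero, Matrix.cons_val_one, one_mul, zero_mul, sub_zero, mul_one,
    Finset.prod_const_one, hV]
  refine mul_ne_zero ?_ (Matrix.det_vandermonde_ne_zero_iff.2 hinj)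
  refine Finset.prod_ne_zero_iff.2 fun i _ => Finset.prod_ne_zero_iff.2 fun j _ => ?_
  split_ifs with h
  · exact one_ne_zero
  · exact sub_ne_zero.2 fun h' => h (hinj h'.symm)

lemma DeJonquieres.nonempty_of_discriminant_ne_zero {p : Fin (2 * f + 2 + 1) → Fin 3 → ℂ}
    (h : discriminant p ≠ 0) : Nonempty (DeJonquieres f (p 0) fun i => p i.succ) := by
  simp only [discriminant, ne_eq, mul_eq_zero, not_or, Finset.prod_eq_zero_iff, not_exists,
    Finset.mem_univ, true_and] at h
  obtain ⟨⟨⟨h1, h2⟩, h3⟩, h4⟩ := h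
  exact nonempty h1 h2 (fun i j hij => by simpa [hij] using h3 i j) h4

end Interpolation

lemma generically_finrank_linSys (f : ℕ) : Generically (2 * f + 2 + 1) fun p => ∀ j ≤ 6,
    Module.finrank ℂ (linSys p (6 * f + 6 + j) (qh (2 * f + 2) (6 * f + j))) =
      (j + 2).choose 2 := by
  have h (p : Fin (2 * f + 2 + 1) → Fin 3 → ℂ) : eval (fun x => p x.1 x.2)
      (discriminant fun i k => X (i, k)) = discriminant p := by
    simp [map_discriminant]
  refine ⟨discriminant fun i k => X (i, k), fun h0 => ?_, fun p _ hp j hj => ?_⟩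
  · refine discriminant_monomial_curve_ne_zero (f := f) ?_
    rw [← h, h0, map_zero]
  · rw [h] at hp
    obtain ⟨J⟩ := DeJonquieres.nonempty_of_discriminant_ne_zero hp
    have hJ := J.finrank_linSys hj
    rwa [show (Fin.cons (p 0) fun i => p i.succ : Fin (2 * f + 2 + 1) → Fin 3 → ℂ) = p from
      Fin.cons_self_tail p] at hJ

theorem special_L_6e_families (e : ℕ) (he : 1 ≤ e) :
    virtDim (6 * e) (qh (2 * e) (6 * e - 6)) = -15 ∧
    virtDim (6 * e + 1) (qh (2 * e) (6 * e - 5)) = -8 ∧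
    virtDim (6 * e + 2) (qh (2 * e) (6 * e - 4)) = -1 ∧
    virtDim (6 * e + 3) (qh (2 * e) (6 * e - 3)) = 6 ∧
    virtDim (6 * e + 4) (qh (2 * e) (6 * e - 2)) = 13 ∧
    Generically (2 * e + 1) (fun p =>
      (projDim p (6 * e) (qh (2 * e) (6 * e - 6)) = 0 ∧
        projDim p (6 * e) (qh (2 * e) (6 * e - 6)) >
          max (-1) (virtDim (6 * e) (qh (2 * e) (6 * e - 6)))) ∧
      (projDim p (6 * e + 1) (qh (2 * e) (6 * e - 5)) = 2 ∧
        projDim p (6 * e + 1) (qh (2 * e) (6 * e - 5)) >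
          max (-1) (virtDim (6 * e + 1) (qh (2 * e) (6 * e - 5)))) ∧
      (projDim p (6 * e + 2) (qh (2 * e) (6 * e - 4)) = 5 ∧
        projDim p (6 * e + 2) (qh (2 * e) (6 * e - 4)) >
          max (-1) (virtDim (6 * e + 2) (qh (2 * e) (6 * e - 4)))) ∧
      (projDim p (6 * e + 3) (qh (2 * e) (6 * e - 3)) = 9 ∧
        projDim p (6 * e + 3) (qh (2 * e) (6 * e - 3)) >
          max (-1) (virtDim (6 * e + 3) (qh (2 * e) (6 * e - 3)))) ∧
      (projDim p (6 * e + 4) (qh (2 * e) (6 * e - 2)) = 14 ∧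
        projDim p (6 * e + 4) (qh (2 * e) (6 * e - 2)) >
          max (-1) (virtDim (6 * e + 4) (qh (2 * e) (6 * e - 2))))) := by
  obtain ⟨f, rfl⟩ : ∃ f, e = f + 1 := ⟨e - 1, by omega⟩
  rw [show 2 * (f + 1) = 2 * f + 2 by ring, show 6 * (f + 1) = 6 * f + 6 by ring,
    show 6 * f + 6 - 6 = 6 * f by omega, show 6 * f + 6 - 5 = 6 * f + 1 by omega,
    show 6 * f + 6 - 4 = 6 * f + 2 by omega, show 6 * f + 6 - 3 = 6 * f + 3 by omega,
    show 6 * f + 6 - 2 = 6 * f + 4 by omega]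
  have half {x y : ℤ} (h : x = 2 * y) : x / 2 = y := by omega
  have v0 : virtDim (6 * f + 6) (qh (2 * f + 2) (6 * f)) = -15 := by
    rw [virtDim_qh, half (y := (3 * f + 3) * (6 * f + 9)) (by push_cast; ring),
      half (y := 3 * f * (6 * f + 1)) (by push_cast; ring)]
    push_cast
    ring
  have v1 : virtDim (6 * f + 6 + 1) (qh (2 * f + 2) (6 * f + 1)) = -8 := by
    rw [virtDim_qh, half (y := (6 * f + 7) * (3 * f + 5)) (by push_cast; ring),
      half (y := (6 * f + 1) * (3 * f + 1)) (by push_cast; ring)]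
    push_cast
    ring
  have v2 : virtDim (6 * f + 6 + 2) (qh (2 * f + 2) (6 * f + 2)) = -1 := by
    rw [virtDim_qh, half (y := (3 * f + 4) * (6 * f + 11)) (by push_cast; ring),
      half (y := (3 * f + 1) * (6 * f + 3)) (by push_cast; ring)]
    push_cast
    ring
  have v3 : virtDim (6 * f + 6 + 3) (qh (2 * f + 2) (6 * f + 3)) = 6 := by
    rw [virtDim_qh, half (y := (6 * f + 9) * (3 * f + 6)) (by push_cast; ring),
      half (y := (6 * f + 3) * (3 * f + 2)) (by push_cast; ring)]
    push_cast
    ring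
  have v4 : virtDim (6 * f + 6 + 4) (qh (2 * f + 2) (6 * f + 4)) = 13 := by
    rw [virtDim_qh, half (y := (3 * f + 5) * (6 * f + 13)) (by push_cast; ring),
      half (y := (3 * f + 2) * (6 * f + 5)) (by push_cast; ring)]
    push_cast
    ring
  refine ⟨v0, v1, v2, v3, v4, ?_⟩
  obtain ⟨P, hP, h⟩ := generically_finrank_linSys f
  refine ⟨P, hP, fun p hp hPp => ?_⟩
  have key (j : ℕ) (hj : j ≤ 6) : projDim p (6 * f + 6 + j) (qh (2 * f + 2) (6 * f + j)) =
      (j + 2).choose 2 - 1 := by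
    rw [projDim, h p hp hPp j hj]
  have k0 := key 0 (by norm_num)
  simp only [add_zero] at k0
  beta_reduce
  rw [v0, v1, v2, v3, v4, k0, key 1 (by norm_num), key 2 (by norm_num), key 3 (by norm_num),
    key 4 (by norm_num)]
  decide
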